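/- arXiv:2305.09081 — 3 statements merged into one kernel-verified Lean document; each statement's English description precedes it below -/
import Mathlib

section
/- For every pair (d, d₁) ∈ {(6,8), (8,7), (14,5), (18,4), (22,0), (22,3)}, every c ∈ {1, 2, 4}, and all rational numbers a, b satisfying d·a² − 2·(12 − d₁)·a·b + 2·b² = −2 and d·a − (12 − d₁)·b = c, it is NOT the case that a ≥ 0 and 2a is an integer. -/
/-- Eliminating `b` from the system leaves a single quadratic equation in `m = 2a`. -/
lemma quadratic_of_system {d e c a b m : ℚ}
    (h1 : d * a ^ 2 - 2 * e * a * b + 2 * b ^ 2 = -2) (h2 : d * a - e * b = c)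
    (hm : 2 * a = m) :
    (e ^ 2 - 2 * d) * (d * m ^ 2 - 4 * c * m) = 8 * (c ^ 2 + e ^ 2) := by
  subst hm h2
  linear_combination (-4 * e ^ 2) * h1

/-- For each pair `(d, d₁)` in `{(6,8), (8,7), (14,5), (18,4), (22,0), (22,3)}`,
each `c ∈ {1, 2, 4}`, and all rationals `a`, `b` with
`d·a² − 2·(12 − d₁)·a·b + 2·b² = −2` and `d·a − (12 − d₁)·b = c`,
it is not the case that `a ≥ 0` and `2a ∈ ℤ`. -/
theorem stmt_2 (d d₁ : ℚ)
    (hdd₁ : (d, d₁) ∈ ({(6, 8), (8, 7), (14, 5), (18, 4), (22, 0), (22, 3)} : Set (ℚ × ℚ)))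
    (c : ℚ) (hc : c ∈ ({1, 2, 4} : Set ℚ))
    (a b : ℚ)
    (h1 : d * a ^ 2 - 2 * (12 - d₁) * a * b + 2 * b ^ 2 = -2)
    (h2 : d * a - (12 - d₁) * b = c) :
    ¬ (0 ≤ a ∧ ∃ m : ℤ, 2 * a = (m : ℚ)) := by
  rintro ⟨ha, m, hm⟩
  have key := quadratic_of_system h1 h2 hm
  have hm0 : 0 ≤ m := by
    have : (0 : ℚ) ≤ m := by linarith
    exact_mod_cast this
  clear h1 h2 hm ha
  simp only [Set.mem_insert_iff, Set.mem_singleton_iff, Prod.mk.injEq] at hdd₁ hc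
  rcases hdd₁ with ⟨rfl, rfl⟩ | hdd₁
  · have hm6 : m < 6 := by
      by_contra! h
      have h' : (6 : ℚ) ≤ m := by exact_mod_cast h
      rcases hc with rfl | rfl | rfl <;> nlinarith
    interval_cases m <;> rcases hc with rfl | rfl | rfl <;> norm_num at key
  -- In the remaining cases the equation fails modulo a prime power dividing `e ^ 2 - 2 * d`.
  · rcases hdd₁ with ⟨rfl, rfl⟩ | ⟨rfl, rfl⟩ | ⟨rfl, rfl⟩ | ⟨rfl, rfl⟩ | ⟨rfl, rfl⟩ <;>
      rcases hc with rfl | rfl | rfl <;> norm_num at key <;> norm_cast at key <;>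
      generalize m ^ 2 = x at key <;> omega
end

section
/- Let L = {(6,20,8), (8,14,7), (14,5,5), (18,2,4), (22,0,0), (22,0,3)} and T = {(6,20), (8,14), (10,10), (12,7), (14,5), (16,3), (18,2), (22,0), (16,10), (24,5), (32,2), (40,0), (54,0), (64,0)}. Suppose (d, h, d₁) ∈ L, (e, t) ∈ T, g = h − t ≥ 0, d₂ is an integer with d₂ ≥ 1, and a, b are rational numbers with a ≥ 0 such that 2a and 2b are integers, and a, b are integers whenever d₁ ≠ 0, satisfying the three equations: d·a² − 2·(12 − d₁)·a·b + 2·b² = 2g − 2; d·a − (12 − d₁)·b = d₂ + 2 − 2g; and d = e − 2 + 2g − 2·d₂. Then (d, d₁, e, g, d₂, a, b) = (18, 4, 64, 2, 24, 3, 4) or (d, d₁, e, g, d₂, a, b) = (22, 3, 54, 0, 15, 2, 3). -/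
/-- Eliminating `m` from the system with denominators cleared (`m = 2a`, `n = 2b`, `r = 2s`)
determines `n ^ 2`. -/
theorem sq_eq_of_system {d c g r m n : ℤ}
    (h1 : d * m ^ 2 - 2 * c * m * n + 2 * n ^ 2 = 4 * (2 * g - 2))
    (h2 : d * m - c * n = r) :
    (c ^ 2 - 2 * d) * n ^ 2 = r ^ 2 - 4 * d * (2 * g - 2) := by
  linear_combination (-d) * h1 + (d * m - c * n + r) * h2

/-- The arithmetic case analysis for the birational contraction `π₂`: solving the system
of three equations for each triple in `L` and each pair in `T` yields exactly the data of
the Sarkisov links 11 and 14. -/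
theorem stmt_3 (d h d₁ : ℤ)
    (hL : (d, h, d₁) ∈ ({(6, 20, 8), (8, 14, 7), (14, 5, 5), (18, 2, 4),
      (22, 0, 0), (22, 0, 3)} : Set (ℤ × ℤ × ℤ)))
    (e t : ℤ)
    (hT : (e, t) ∈ ({(6, 20), (8, 14), (10, 10), (12, 7), (14, 5), (16, 3),
      (18, 2), (22, 0), (16, 10), (24, 5), (32, 2), (40, 0), (54, 0),
      (64, 0)} : Set (ℤ × ℤ)))
    (g : ℤ) (hg : g = h - t) (hg0 : 0 ≤ g)
    (d₂ : ℤ) (hd₂ : 1 ≤ d₂)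
    (a b : ℚ) (ha0 : 0 ≤ a)
    (ha : ∃ m : ℤ, 2 * a = (m : ℚ)) (hb : ∃ n : ℤ, 2 * b = (n : ℚ))
    (hint : d₁ ≠ 0 → (∃ m : ℤ, a = (m : ℚ)) ∧ (∃ n : ℤ, b = (n : ℚ)))
    (h1 : (d : ℚ) * a ^ 2 - 2 * (12 - (d₁ : ℚ)) * a * b + 2 * b ^ 2
      = 2 * (g : ℚ) - 2)
    (h2 : (d : ℚ) * a - (12 - (d₁ : ℚ)) * b = (d₂ : ℚ) + 2 - 2 * (g : ℚ))
    (h3 : d = e - 2 + 2 * g - 2 * d₂) :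
    (d = 18 ∧ d₁ = 4 ∧ e = 64 ∧ g = 2 ∧ d₂ = 24 ∧ a = 3 ∧ b = 4) ∨
    (d = 22 ∧ d₁ = 3 ∧ e = 54 ∧ g = 0 ∧ d₂ = 15 ∧ a = 2 ∧ b = 3) := by
  obtain ⟨m, hm⟩ := ha
  obtain ⟨n, hn⟩ := hb
  have hm0 : 0 ≤ m := by
    have : (0 : ℚ) ≤ m := by linarith
    exact_mod_cast this
  have h1' : d * m ^ 2 - 2 * (12 - d₁) * m * n + 2 * n ^ 2 = 4 * (2 * g - 2) := by
    have : (d : ℚ) * m ^ 2 - 2 * (12 - d₁) * m * n + 2 * n ^ 2 = 4 * (2 * g - 2) := by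
      rw [← hm, ← hn]; linear_combination 4 * h1
    exact_mod_cast this
  have h2' : d * m - (12 - d₁) * n = e + 2 - 2 * g - d := by
    have : (d : ℚ) * m - (12 - d₁) * n = 2 * (d₂ + 2 - 2 * g) := by
      rw [← hm, ← hn]; linear_combination 2 * h2
    have : d * m - (12 - d₁) * n = 2 * (d₂ + 2 - 2 * g) := by exact_mod_cast this
    linarith
  have hsq := sq_eq_of_system h1' h2'
  have hn0 := sq_nonneg n
  suffices hs : (d = 18 ∧ d₁ = 4 ∧ e = 64 ∧ g = 2 ∧ d₂ = 24 ∧ m = 6 ∧ n = 8) ∨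
      (d = 22 ∧ d₁ = 3 ∧ e = 54 ∧ g = 0 ∧ d₂ = 15 ∧ m = 4 ∧ n = 6) by
    rcases hs with ⟨hd, hd₁, he, hg, hd₂, rfl, rfl⟩ | ⟨hd, hd₁, he, hg, hd₂, rfl, rfl⟩
    · push_cast at hm hn
      exact .inl ⟨hd, hd₁, he, hg, hd₂, by linarith, by linarith⟩
    · push_cast at hm hn
      exact .inr ⟨hd, hd₁, he, hg, hd₂, by linarith, by linarith⟩
  clear h1 h2 hint hm hn ha0 h1'
  simp only [Set.mem_insert_iff, Set.mem_singleton_iff, Prod.mk.injEq] at hL hT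
  subst hg
  -- Outside the two listed cases the value forced on `n ^ 2` is negative or not an integer.
  rcases hL with ⟨rfl, rfl, rfl⟩ | ⟨rfl, rfl, rfl⟩ | ⟨rfl, rfl, rfl⟩ | ⟨rfl, rfl, rfl⟩ |
      ⟨rfl, rfl, rfl⟩ | ⟨rfl, rfl, rfl⟩ <;>
    rcases hT with ⟨rfl, rfl⟩ | ⟨rfl, rfl⟩ | ⟨rfl, rfl⟩ | ⟨rfl, rfl⟩ | ⟨rfl, rfl⟩ |
      ⟨rfl, rfl⟩ | ⟨rfl, rfl⟩ | ⟨rfl, rfl⟩ | ⟨rfl, rfl⟩ | ⟨rfl, rfl⟩ | ⟨rfl, rfl⟩ |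
      ⟨rfl, rfl⟩ | ⟨rfl, rfl⟩ | ⟨rfl, rfl⟩ <;>
    norm_num at hsq h2' h3 hg0 <;>
    first
    | omega
    | (have hn8 : n ^ 2 = 8 ^ 2 := by linarith
       rcases sq_eq_sq_iff_eq_or_eq_neg.mp hn8 with rfl | rfl <;> omega)
    | (have hn6 : n ^ 2 = 6 ^ 2 := by linarith
       rcases sq_eq_sq_iff_eq_or_eq_neg.mp hn6 with rfl | rfl <;> omega)
end

section
/- For every pair (d, d₁) ∈ {(6,8), (8,7), (14,5), (18,4), (22,0), (22,3)}, every integer d₂ such that either d₂ = d₁ or both d₁ ∈ {0, 3} and d₂ ∈ {0, 3}, and all rational numbers a, b such that 2a and 2b are integers, and a, b are integers whenever d₁ ≠ 0, satisfying d·a² − 2·(12 − d₁)·a·b + 2·b² = 2 and d·a − (12 − d₁)·b = 12 − d₂, one of the following holds: (a, b) = (0, −1) and d₁ = d₂, or (d, d₁, d₂, a, b) = (14, 5, 5, 1, 1). -/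
/-- Eliminating `a` from the two intersection equations. -/
theorem conicBundle_eliminate {d e f a b : ℚ}
    (h1 : d * a ^ 2 - 2 * e * a * b + 2 * b ^ 2 = 2) (h2 : d * a - e * b = f) :
    (e ^ 2 - 2 * d) * b ^ 2 = f ^ 2 - 2 * d := by
  subst h2
  linear_combination -d * h1

/-- If both discriminants have the same degree and `e ^ 2 ≠ 2 * d`, then `(a, b)` is either
`(0, -1)` or `(2 * e / d, 1)`. -/
theorem conicBundle_eq_degree {d e a b : ℚ} (hd : d ≠ 0) (he : e ^ 2 - 2 * d ≠ 0)
    (h1 : d * a ^ 2 - 2 * e * a * b + 2 * b ^ 2 = 2) (h2 : d * a - e * b = e) :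
    (a = 0 ∧ b = -1) ∨ (d * a = 2 * e ∧ b = 1) := by
  have hb : b ^ 2 = 1 := mul_left_cancel₀ he (by rw [conicBundle_eliminate h1 h2, mul_one])
  rcases eq_or_eq_neg_of_sq_eq_sq b 1 (by rw [hb, one_pow]) with rfl | rfl
  · exact Or.inr ⟨by linear_combination h2, rfl⟩
  · exact Or.inl ⟨(mul_eq_zero.mp (by linear_combination h2 : d * a = 0)).resolve_left hd, rfl⟩

/-- The arithmetic case analysis for two conic bundles: either `(a, b) = (0, −1)` with
`d₁ = d₂` (the flop composition is biregular), or `(d, d₁, d₂, a, b) = (14, 5, 5, 1, 1)`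
(the Sarkisov link 7). -/
theorem stmt_4 (d d₁ : ℤ)
    (hdd₁ : (d, d₁) ∈ ({(6, 8), (8, 7), (14, 5), (18, 4), (22, 0), (22, 3)} : Set (ℤ × ℤ)))
    (d₂ : ℤ)
    (hd₂ : d₂ = d₁ ∨ (d₁ ∈ ({0, 3} : Set ℤ) ∧ d₂ ∈ ({0, 3} : Set ℤ)))
    (a b : ℚ)
    (ha : ∃ m : ℤ, 2 * a = (m : ℚ)) (hb : ∃ n : ℤ, 2 * b = (n : ℚ))
    (hint : d₁ ≠ 0 → (∃ m : ℤ, a = (m : ℚ)) ∧ (∃ n : ℤ, b = (n : ℚ)))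
    (h1 : (d : ℚ) * a ^ 2 - 2 * (12 - (d₁ : ℚ)) * a * b + 2 * b ^ 2 = 2)
    (h2 : (d : ℚ) * a - (12 - (d₁ : ℚ)) * b = 12 - (d₂ : ℚ)) :
    ((a, b) = ((0 : ℚ), (-1 : ℚ)) ∧ d₁ = d₂) ∨
    (d = 14 ∧ d₁ = 5 ∧ d₂ = 5 ∧ a = 1 ∧ b = 1) := by
  obtain ⟨m, hm⟩ := ha
  obtain ⟨n, hn⟩ := hb
  by_cases hne : d₂ = d₁
  · subst hne
    have hcase : (a = 0 ∧ b = -1) ∨ ((d : ℚ) * a = 2 * (12 - (d₂ : ℚ)) ∧ b = 1) := by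
      apply conicBundle_eq_degree _ _ h1 h2 <;>
        rcases hdd₁ with h | h | h | h | h | h <;> obtain ⟨rfl, rfl⟩ := Prod.mk.inj h <;> norm_num
    rcases hcase with ⟨rfl, rfl⟩ | ⟨ha, rfl⟩
    · exact Or.inl ⟨rfl, rfl⟩
    · have hdm : d * m = 4 * (12 - d₂) := by
        have : (d : ℚ) * m = 4 * (12 - d₂) := by rw [← hm]; linear_combination 2 * ha
        exact_mod_cast this
      rcases hdd₁ with h | h | h | h | h | h <;> obtain ⟨rfl, rfl⟩ := Prod.mk.inj h <;>
        try omega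
      exact Or.inr ⟨rfl, rfl, rfl, by push_cast at ha; linarith, rfl⟩
  · obtain ⟨h₁, h₂⟩ := hd₂.resolve_left hne
    have hn2 : ((12 - d₁) ^ 2 - 2 * d) * n ^ 2 = 4 * ((12 - d₂) ^ 2 - 2 * d) := by
      have : ((12 - d₁ : ℚ) ^ 2 - 2 * d) * n ^ 2 = 4 * ((12 - d₂) ^ 2 - 2 * d) := by
        rw [← hn]; linear_combination 4 * conicBundle_eliminate h1 h2
      exact_mod_cast this
    have hd : d = 22 := by
      rcases hdd₁ with h | h | h | h | h | h <;> obtain ⟨rfl, rfl⟩ := Prod.mk.inj h <;>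
        simp_all
    subst hd
    rcases h₁ with rfl | rfl <;> rcases h₂ with rfl | rfl <;> first | exact absurd rfl hne | omega
end
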